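/- arXiv:math/0701800 — 8 statements merged into one kernel-verified Lean document; each statement's English description precedes it below -/
import Mathlib

section
/- Let t and x be real numbers with t > 0, x > 0, 4t²(1+x²) ≤ 1, and 4t²(1 + Y₊(x)²) ≤ 1, where Y₊(u) = u(1 − √(1 − 4t²(1+u²)))/(2t(1+u²)) and Y₋(u) = u(1 + √(1 − 4t²(1+u²)))/(2t(1+u²)). Then Y₋(Y₊(x)) = x. -/
/-!
The kernel is symmetric in its two variables, so `y = Y₊(x)` makes `x` a root of the kernel at `y`:
`x` is `Y₊(y)` or `Y₋(y)`. The first is impossible for `x ≠ 0`, since `Y₊` strictly decreases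
absolute values: rationalizing the numerator gives `Y₊(x) (1 + √(1 - 4t²(1 + x²))) = 2tx`,
and `|2t| < 1`.
-/

section Kernel

variable {R : Type*} [CommRing R]

/-- The kernel of the quarter-plane walks with steps `(1, 1)`, `(-1, 1)`, `(1, -1)`, where `t`
marks the length and the denominators of the step polynomial are cleared by `x * y`. -/
def walkKernel (t x y : R) : R :=
  x * y - t * (x ^ 2 * y ^ 2 + x ^ 2 + y ^ 2)

/-- The discriminant in `y` of `walkKernel t x y`, with its square factor `x ^ 2` removed. -/
def walkDiscr (t x : R) : R :=
  1 - 4 * t ^ 2 * (1 + x ^ 2)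

theorem walkKernel_comm (t x y : R) : walkKernel t x y = walkKernel t y x := by
  unfold walkKernel
  ring

theorem walkKernel_eq_zero_iff_quadratic (t x y : R) :
    walkKernel t x y = 0 ↔ t * (1 + x ^ 2) * (y * y) + -x * y + t * x ^ 2 = 0 := by
  rw [← neg_eq_zero, walkKernel]
  ring_nf

theorem discrim_walkKernel (t x : R) :
    discrim (t * (1 + x ^ 2)) (-x) (t * x ^ 2) = x ^ 2 * walkDiscr t x := by
  unfold discrim walkDiscr
  ring

theorem walkDiscr_nonneg_of_walkKernel_eq_zero [LinearOrder R] [IsStrictOrderedRing R]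
    {t x y : R} (hx : x ≠ 0) (h : walkKernel t x y = 0) : 0 ≤ walkDiscr t x := by
  have hsq := discrim_eq_sq_of_quadratic_eq_zero ((walkKernel_eq_zero_iff_quadratic t x y).1 h)
  rw [discrim_walkKernel] at hsq
  exact nonneg_of_mul_nonneg_right (hsq ▸ sq_nonneg _) (sq_pos_of_ne_zero hx)

theorem eq_zero_of_walkKernel_zero_left [IsDomain R] {t y : R} (ht : t ≠ 0)
    (h : walkKernel t 0 y = 0) : y = 0 := by
  simpa [walkKernel, ht] using h

end Kernel

/-- The root `Y₊` in `y` of `walkKernel t x y`. It carries the minus sign of the quadratic formula: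
it is the branch of smaller absolute value. -/
noncomputable def walkRootPlus (t x : ℝ) : ℝ :=
  x * (1 - √(walkDiscr t x)) / (2 * t * (1 + x ^ 2))

/-- The root `Y₋` in `y` of `walkKernel t x y`, the branch of larger absolute value. -/
noncomputable def walkRootMinus (t x : ℝ) : ℝ :=
  x * (1 + √(walkDiscr t x)) / (2 * t * (1 + x ^ 2))

section Roots

variable {t x : ℝ}

theorem walkKernel_eq_zero_iff (ht : t ≠ 0) (hx : 0 ≤ walkDiscr t x) (y : ℝ) :
    walkKernel t x y = 0 ↔ y = walkRootPlus t x ∨ y = walkRootMinus t x := by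
  have hlead : t * (1 + x ^ 2) ≠ 0 := mul_ne_zero ht (by positivity)
  have hdiscr : discrim (t * (1 + x ^ 2)) (-x) (t * x ^ 2)
      = x * √(walkDiscr t x) * (x * √(walkDiscr t x)) := by
    rw [discrim_walkKernel, mul_mul_mul_comm, Real.mul_self_sqrt hx, sq]
  rw [walkKernel_eq_zero_iff_quadratic, quadratic_eq_zero_iff hlead hdiscr, or_comm]
  simp only [walkRootPlus, walkRootMinus, neg_neg, mul_sub, mul_add, mul_one, mul_assoc]

theorem walkRootPlus_mul_one_add_sqrt (ht : t ≠ 0) (hx : 0 ≤ walkDiscr t x) :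
    walkRootPlus t x * (1 + √(walkDiscr t x)) = 2 * t * x := by
  have hsqrt : √(walkDiscr t x) ^ 2 = 1 - 4 * t ^ 2 * (1 + x ^ 2) := Real.sq_sqrt hx
  rw [walkRootPlus, div_mul_eq_mul_div, div_eq_iff (by positivity)]
  linear_combination -x * hsqrt

theorem abs_walkRootPlus_lt (ht : t ≠ 0) (hx₀ : x ≠ 0) (hx : 0 ≤ walkDiscr t x) :
    |walkRootPlus t x| < |x| := by
  have hlt : |2 * t| < 1 := by
    have htx : 0 < t ^ 2 * x ^ 2 := by positivity
    rw [← sq_lt_one_iff_abs_lt_one]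
    unfold walkDiscr at hx
    linarith
  calc |walkRootPlus t x|
      ≤ |walkRootPlus t x| * (1 + √(walkDiscr t x)) :=
        le_mul_of_one_le_right (abs_nonneg _) (le_add_of_nonneg_right (Real.sqrt_nonneg _))
    _ = |walkRootPlus t x * (1 + √(walkDiscr t x))| := by
        rw [abs_mul, abs_of_pos (by positivity : 0 < 1 + √(walkDiscr t x))]
    _ = |2 * t| * |x| := by rw [walkRootPlus_mul_one_add_sqrt ht hx, abs_mul]
    _ < |x| := mul_lt_of_lt_one_left (abs_pos.2 hx₀) hlt

theorem stmt_1_general (ht : t ≠ 0) (hx : 0 ≤ walkDiscr t x) :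
    walkRootMinus t (walkRootPlus t x) = x := by
  rcases eq_or_ne x 0 with rfl | hx₀
  · simp [walkRootPlus, walkRootMinus]
  have hker : walkKernel t (walkRootPlus t x) x = 0 := by
    rw [walkKernel_comm]
    exact (walkKernel_eq_zero_iff ht hx _).2 (Or.inl rfl)
  have hy₀ : walkRootPlus t x ≠ 0 := fun hy ↦
    hx₀ (eq_zero_of_walkKernel_zero_left ht (hy ▸ hker))
  have hy : 0 ≤ walkDiscr t (walkRootPlus t x) := walkDiscr_nonneg_of_walkKernel_eq_zero hy₀ hker
  rcases (walkKernel_eq_zero_iff ht hy x).1 hker with hplus | hminus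
  · have hlt := (abs_walkRootPlus_lt ht hy₀ hy).trans (abs_walkRootPlus_lt ht hx₀ hx)
    rw [← hplus] at hlt
    exact absurd hlt (lt_irrefl _)
  · exact hminus.symm

end Roots

theorem stmt_1 (t x : ℝ) (Yp Ym : ℝ → ℝ)
    (hYp : ∀ u, Yp u = u * (1 - Real.sqrt (1 - 4 * t ^ 2 * (1 + u ^ 2))) / (2 * t * (1 + u ^ 2)))
    (hYm : ∀ u, Ym u = u * (1 + Real.sqrt (1 - 4 * t ^ 2 * (1 + u ^ 2))) / (2 * t * (1 + u ^ 2)))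
    (ht : 0 < t) (hx : 0 < x)
    (h1 : 4 * t ^ 2 * (1 + x ^ 2) ≤ 1)
    (h2 : 4 * t ^ 2 * (1 + (Yp x) ^ 2) ≤ 1) :
    Ym (Yp x) = x := by
  rw [hYm, hYp]
  exact stmt_1_general ht.ne' (sub_nonneg.2 h1)
end

section
/- Define Y : ℝ → ℝ by Y(y) = 3y(1 − √(1 − (4/9)(1+y²)))/(2(1+y²)) (the kernel root at t = 1/3). Then for every n ≥ 0, the n-fold iterate satisfies Y⁽ⁿ⁾(1) = 1/F(2n+1), where F(m) denotes the m-th Fibonacci number with F(1) = F(2) = 1. -/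
/-!
In the reciprocals `a = 1 / y`, `b = 1 / x` the kernel equation at `t = 1 / 3` becomes the
Markov-type equation `a ^ 2 + b ^ 2 + 1 = 3 * a * b`, and the small root `x` becomes the larger of
the two solutions `b`. By Cassini's identity, consecutive odd-indexed Fibonacci numbers solve this
equation, so each application of `Y` moves one step along `1 / F₁, 1 / F₃, 1 / F₅, …`.
-/

/-- The kernel `K(x, y) = xy - t(x²y² + x² + y²)` of the quarter-plane walks with steps `(1, 1)`,
`(-1, 1)`, `(1, -1)`, that is, `xy` times `1 - t(xy + x / y + y / x)`. -/
def kernel {R : Type*} [CommRing R] (t x y : R) : R :=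
  x * y - t * (x ^ 2 * y ^ 2 + x ^ 2 + y ^ 2)

/-- The root `x = t * y + O(t ^ 3)` of the kernel, given by the quadratic formula with the minus
sign and with a factor `y` extracted from the square root. It is a junk value when `t = 0` or when
the discriminant is negative, that is, `1 < 4 * t ^ 2 * (1 + y ^ 2)` and `y ≠ 0`. -/
noncomputable def kernelRoot (t y : ℝ) : ℝ :=
  y * (1 - √(1 - 4 * t ^ 2 * (1 + y ^ 2))) / (2 * t * (1 + y ^ 2))

theorem kernelRoot_one_third (y : ℝ) :
    kernelRoot (1 / 3) y = 3 * y * (1 - √(1 - 4 / 9 * (1 + y ^ 2))) / (2 * (1 + y ^ 2)) := by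
  rw [kernelRoot, show (4 : ℝ) * (1 / 3) ^ 2 = 4 / 9 by norm_num]
  field_simp

theorem kernel_inv_inv_eq_zero_iff {K : Type*} [Field K] {t a b : K} (ha : a ≠ 0) (hb : b ≠ 0) :
    kernel t b⁻¹ a⁻¹ = 0 ↔ a * b = t * (a ^ 2 + b ^ 2 + 1) := by
  have clear_denominators :
      kernel t b⁻¹ a⁻¹ = (a * b - t * (a ^ 2 + b ^ 2 + 1)) / (a * b) ^ 2 := by
    unfold kernel
    field_simp
    ring
  rw [clear_denominators, div_eq_zero_iff, or_iff_left (pow_ne_zero 2 (mul_ne_zero ha hb)),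
    sub_eq_zero]

theorem kernelRoot_eq_of_kernel_eq_zero {t x y : ℝ} (ht : t ≠ 0) (hy : 0 ≤ y)
    (hxy : kernel t x y = 0) (hx : 2 * t * (1 + y ^ 2) * x ≤ y) : kernelRoot t y = x := by
  have discrim_eq_sq :
      y ^ 2 * (1 - 4 * t ^ 2 * (1 + y ^ 2)) = (y - 2 * t * (1 + y ^ 2) * x) ^ 2 := by
    unfold kernel at hxy
    linear_combination 4 * t * (1 + y ^ 2) * hxy
  have sqrt_discrim :
      y * √(1 - 4 * t ^ 2 * (1 + y ^ 2)) = y - 2 * t * (1 + y ^ 2) * x := by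
    rw [← Real.sqrt_sq (sub_nonneg.2 hx), ← discrim_eq_sq, Real.sqrt_mul (sq_nonneg y),
      Real.sqrt_sq hy]
  have leading_ne_zero : 2 * t * (1 + y ^ 2) ≠ 0 := by positivity
  rw [kernelRoot, div_eq_iff leading_ne_zero]
  linear_combination -sqrt_discrim

theorem kernelRoot_inv {t a b : ℝ} (ha : 0 < a) (hb : 0 < b)
    (hab : a * b = t * (a ^ 2 + b ^ 2 + 1)) (hle : a ≤ 2 * t * b) :
    kernelRoot t a⁻¹ = b⁻¹ := by
  have ht : t ≠ 0 := by
    rintro rfl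
    linarith
  refine kernelRoot_eq_of_kernel_eq_zero ht (inv_nonneg.2 ha.le)
    ((kernel_inv_inv_eq_zero_iff ha.ne' hb.ne').2 hab) ?_
  have two_mul_sub_le : 2 * (a * b - t * b ^ 2) ≤ a * b := by
    linarith [mul_le_mul_of_nonneg_right hle hb.le]
  calc 2 * t * (1 + a⁻¹ ^ 2) * b⁻¹ = 2 * (t * (a ^ 2 + 1)) / (a ^ 2 * b) := by field_simp
    _ = 2 * (a * b - t * b ^ 2) / (a ^ 2 * b) := by rw [hab]; ring
    _ ≤ a * b / (a ^ 2 * b) := by gcongr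
    _ = a⁻¹ := by field_simp

theorem kernelRoot_iterate_inv {t : ℝ} {u : ℕ → ℝ} (hpos : ∀ n, 0 < u n)
    (hu : ∀ n, u n * u (n + 1) = t * (u n ^ 2 + u (n + 1) ^ 2 + 1))
    (hle : ∀ n, u n ≤ 2 * t * u (n + 1)) (n : ℕ) :
    (kernelRoot t)^[n] (u 0)⁻¹ = (u n)⁻¹ := by
  induction n with
  | zero => rfl
  | succ n ih =>
    rw [Function.iterate_succ_apply', ih,
      kernelRoot_inv (hpos n) (hpos (n + 1)) (hu n) (hle n)]

theorem fib_mul_fib_add_two_of_odd {m : ℕ} (hm : Odd m) :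
    m.fib * (m + 2).fib = (m + 1).fib ^ 2 + 1 := by
  have cassini := Int.fib_add_sq_sub_fib_mul_fib_add_two_mul m 1
  rw [Int.natAbs_natCast, hm.neg_one_pow, Int.fib_one, one_pow, mul_one] at cassini
  zify
  have cassini_cast : ((m + 1).fib : ℤ) ^ 2 - m.fib * (m + 2).fib = -1 := cassini
  linarith

theorem fib_sq_add_fib_add_two_sq_add_one_of_odd {m : ℕ} (hm : Odd m) :
    m.fib ^ 2 + (m + 2).fib ^ 2 + 1 = 3 * (m.fib * (m + 2).fib) := by
  have cassini := fib_mul_fib_add_two_of_odd hm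
  rw [Nat.fib_add_two] at cassini ⊢
  linarith

theorem two_mul_fib_le_fib_add_two (m : ℕ) : 2 * m.fib ≤ (m + 2).fib := by
  rw [Nat.fib_add_two, two_mul]
  exact Nat.add_le_add_left Nat.fib_le_fib_succ _

theorem stmt_3 (Y : ℝ → ℝ)
    (hY : ∀ y, Y y = 3 * y * (1 - Real.sqrt (1 - (4 / 9) * (1 + y ^ 2))) / (2 * (1 + y ^ 2))) :
    ∀ n : ℕ, Y^[n] 1 = 1 / (Nat.fib (2 * n + 1) : ℝ) := by
  have Y_eq_kernelRoot : Y = kernelRoot (1 / 3) :=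
    funext fun y => (hY y).trans (kernelRoot_one_third y).symm
  have fib_pos (n : ℕ) : (0 : ℝ) < Nat.fib (2 * n + 1) :=
    Nat.cast_pos.2 (Nat.fib_pos.2 (Nat.succ_pos _))
  have fib_markov (n : ℕ) : (Nat.fib (2 * n + 1) : ℝ) * Nat.fib (2 * n + 1 + 2) =
      1 / 3 * ((Nat.fib (2 * n + 1) : ℝ) ^ 2 + (Nat.fib (2 * n + 1 + 2) : ℝ) ^ 2 + 1) := by
    have h := fib_sq_add_fib_add_two_sq_add_one_of_odd (odd_two_mul_add_one n)
    rify at h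
    linarith
  have fib_growth (n : ℕ) :
      (Nat.fib (2 * n + 1) : ℝ) ≤ 2 * (1 / 3) * Nat.fib (2 * n + 1 + 2) := by
    have h := two_mul_fib_le_fib_add_two (2 * n + 1)
    rify at h
    linarith [fib_pos n]
  intro n
  simpa [Y_eq_kernelRoot] using
    kernelRoot_iterate_inv (u := fun k => Nat.fib (2 * k + 1)) fib_pos fib_markov fib_growth n
end

section
/- The series ∑_{n≥0} (−1)ⁿ/(F(2n+1)·F(2n+3)), where F denotes the Fibonacci sequence with F(1) = F(2) = 1, converges to a value strictly greater than 2/5 and strictly less than 1/2. -/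
/-!
The terms `1 / (F(2n+1) * F(2n+3))` are strictly decreasing and, since `F(n) / F(n+1)` tends to
`1 / φ < 1`, summable. A strictly decreasing alternating series lies strictly between its partial
sums of even and odd length, and here `2 / 5 = 1/2 - 1/10` and `1 / 2` are the first two of them.
-/

open Filter Finset Topology

section AlternatingSeries

variable {E : Type*} [Ring E] [PartialOrder E] [IsOrderedRing E] [TopologicalSpace E]
  [OrderClosedTopology E] {f : ℕ → E} {l : E}

theorem alternating_series_lt_tendsto_of_strictAnti (hf : StrictAnti f)
    (hl : Tendsto (fun n ↦ ∑ i ∈ range n, (-1) ^ i * f i) atTop (𝓝 l)) (k : ℕ) :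
    ∑ i ∈ range (2 * k), (-1) ^ i * f i < l :=
  calc
    ∑ i ∈ range (2 * k), (-1) ^ i * f i
      < ∑ i ∈ range (2 * k), (-1) ^ i * f i + (f (2 * k) - f (2 * k + 1)) :=
        lt_add_of_pos_right _ (sub_pos.2 (hf (Nat.lt_succ_self _)))
    _ = ∑ i ∈ range (2 * (k + 1)), (-1) ^ i * f i := by
        simp [mul_add_one, sum_range_succ, pow_succ, sub_eq_add_neg, add_assoc]
    _ ≤ l := hf.antitone.alternating_series_le_tendsto hl (k + 1)

theorem tendsto_lt_alternating_series_of_strictAnti (hf : StrictAnti f)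
    (hl : Tendsto (fun n ↦ ∑ i ∈ range n, (-1) ^ i * f i) atTop (𝓝 l)) (k : ℕ) :
    l < ∑ i ∈ range (2 * k + 1), (-1) ^ i * f i :=
  calc
    l ≤ ∑ i ∈ range (2 * (k + 1) + 1), (-1) ^ i * f i :=
        hf.antitone.tendsto_le_alternating_series hl (k + 1)
    _ = ∑ i ∈ range (2 * k + 1), (-1) ^ i * f i + (-f (2 * k + 1) + f (2 * k + 2)) := by
        simp [mul_add_one, sum_range_succ, pow_succ, add_assoc]
    _ < ∑ i ∈ range (2 * k + 1), (-1) ^ i * f i :=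
        add_lt_of_neg_right _ (neg_add_neg_iff.2 (hf (Nat.lt_succ_self _)))

end AlternatingSeries

theorem summable_inv_fib : Summable fun n ↦ (Nat.fib n : ℝ)⁻¹ := by
  have ratio_tendsto : Tendsto (fun n ↦ ‖(Nat.fib (n + 1) : ℝ)⁻¹‖ / ‖(Nat.fib n : ℝ)⁻¹‖) atTop
      (𝓝 (-Real.goldenConj)) := by
    simpa [div_eq_mul_inv, mul_comm] using tendsto_fib_div_fib_succ_atTop
  refine summable_of_ratio_test_tendsto_lt_one (neg_lt.1 Real.neg_one_lt_goldenConj) ?_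
    ratio_tendsto
  filter_upwards [eventually_gt_atTop 0] with n hn
  exact inv_ne_zero (Nat.cast_ne_zero.2 (Nat.fib_pos.2 hn).ne')

theorem summable_inv_fib_mul_fib_add (k : ℕ) :
    Summable fun n ↦ ((Nat.fib n : ℝ) * Nat.fib (n + k))⁻¹ := by
  refine summable_inv_fib.of_nonneg_of_le (fun n ↦ by positivity) fun n ↦ ?_
  rcases n.eq_zero_or_pos with rfl | hn
  · simp
  · have one_le_fib : (1 : ℝ) ≤ Nat.fib (n + k) := by
      exact_mod_cast Nat.fib_pos.2 (Nat.add_pos_left hn k)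
    rw [mul_inv]
    exact mul_le_of_le_one_right (by positivity) (inv_le_one_of_one_le₀ one_le_fib)

theorem strictMono_fib_two_mul_add_one : StrictMono fun n ↦ Nat.fib (2 * n + 1) :=
  strictMono_nat_of_lt_succ fun n ↦ by
    simp [mul_add_one, Nat.fib_add_two (n := 2 * n + 1)]

theorem strictAnti_inv_fib_mul_fib_odd :
    StrictAnti fun n ↦ ((Nat.fib (2 * n + 1) : ℝ) * Nat.fib (2 * n + 3))⁻¹ := fun m n h ↦ by
  have fib_lt : Nat.fib (2 * m + 1) < Nat.fib (2 * n + 1) := strictMono_fib_two_mul_add_one h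
  have fib_lt' : Nat.fib (2 * m + 3) < Nat.fib (2 * n + 3) :=
    strictMono_fib_two_mul_add_one (Nat.succ_lt_succ h)
  refine inv_strictAnti₀ (by simp) ?_
  exact_mod_cast Nat.mul_lt_mul'' fib_lt fib_lt'

theorem stmt_4 :
    ∃ L : ℝ,
      HasSum (fun n : ℕ => (-1 : ℝ) ^ n / ((Nat.fib (2 * n + 1) : ℝ) * (Nat.fib (2 * n + 3) : ℝ))) L ∧
      2 / 5 < L ∧ L < 1 / 2 := by
  simp only [div_eq_mul_inv ((-1 : ℝ) ^ _)]
  have odd_injective : Function.Injective fun n : ℕ ↦ 2 * n + 1 := fun m n h ↦ by lia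
  obtain ⟨L, hL⟩ := ((summable_inv_fib_mul_fib_add 2).comp_injective odd_injective).alternating
  have lower := alternating_series_lt_tendsto_of_strictAnti strictAnti_inv_fib_mul_fib_odd
    hL.tendsto_sum_nat 1
  have upper := tendsto_lt_alternating_series_of_strictAnti strictAnti_inv_fib_mul_fib_odd
    hL.tendsto_sum_nat 0
  refine ⟨L, hL, lower.trans_eq' ?_, upper.trans_eq ?_⟩
  · norm_num [sum_range_succ, Nat.fib_add_two]
  · norm_num [Nat.fib_add_two]
end

section
/- Let S = {(1,1), (−1,1), (1,−1)} ⊂ ℤ². The number of sequences p₀, p₁, …, pₙ of points of ℤ² with p₀ = (0,0), p_k − p_{k−1} ∈ S for all 1 ≤ k ≤ n, the second coordinate of every p_k nonnegative, and the second coordinate of pₙ equal to 0, is 2^m·C(m) if n = 2m is even, and 0 if n is odd, where C(m) denotes the m-th Catalan number. -/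
/-- The step set S = {(1,1), (−1,1), (1,−1)}. -/
def stepsS : Set (ℤ × ℤ) := {(1, 1), (-1, 1), (1, -1)}

/-- A half-plane walk (y ≥ 0) of length `n` with steps from `S` ending on the x-axis. -/
def IsHalfWalkToAxis (S : Set (ℤ × ℤ)) (n : ℕ) (p : Fin (n + 1) → ℤ × ℤ) : Prop :=
  p 0 = (0, 0) ∧
  (∀ k : Fin n, p k.succ - p k.castSucc ∈ S) ∧
  (∀ k : Fin (n + 1), 0 ≤ (p k).2) ∧
  (p (Fin.last n)).2 = 0

/-- The number of half-plane walks of length `n` with steps `S` ending on the x-axis. -/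
noncomputable def numHalfWalks (n : ℕ) : ℕ :=
  Nat.card {p : Fin (n + 1) → ℤ × ℤ // IsHalfWalkToAxis stepsS n p}

/-!
Reading off the direction (up or down) of every step turns a half-plane walk ending on the x-axis
into a Dyck word, and a walk is recovered from this word by choosing, for every letter, a step of
that direction. A Dyck word of semilength `m` has `m` letters of each kind, so with `u` up steps and
`d` down steps available it arises from `(u * d) ^ m` walks of length `2 * m`.
-/

open DyckStep

theorem natCard_list_map_eq {α β : Type*} (f : α → β) (L : List β) :
    Nat.card {l : List α // l.map f = L} = (L.map fun b => Nat.card {a // f a = b}).prod := by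
  induction L with
  | nil => simp
  | cons b L ih =>
    let headTail : {a // f a = b} × {l : List α // l.map f = L} ≃
        {l : List α // l.map f = b :: L} :=
      { toFun := fun x => ⟨x.1 :: x.2, by simp [x.1.2, x.2.2]⟩
        invFun := fun
          | ⟨a :: l, h⟩ => (⟨a, (List.cons.inj h).1⟩, ⟨l, (List.cons.inj h).2⟩)
        left_inv := fun _ => rfl
        right_inv := fun
          | ⟨_ :: _, _⟩ => rfl }
    rw [← Nat.card_congr headTail, Nat.card_prod, ih, List.map_cons, List.prod_cons]

theorem finite_list_map_eq {α β : Type*} [Finite α] (f : α → β) (L : List β) :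
    Finite {l : List α // l.map f = L} :=
  ((List.finite_length_eq α L.length).subset fun l (hl : l.map f = L) => by
    simp [← hl]).to_subtype

theorem prod_map_eq_pow_count_mul_pow_count {M : Type*} [CommMonoid M] (c : DyckStep → M)
    (L : List DyckStep) : (L.map c).prod = c U ^ L.count U * c D ^ L.count D := by
  induction L with
  | nil => simp
  | cons s L ih => cases s <;> simp [ih, pow_succ', mul_assoc, mul_left_comm]

theorem prod_map_dyckWord {M : Type*} [CommMonoid M] (c : DyckStep → M) (w : DyckWord) :
    (w.toList.map c).prod = (c U * c D) ^ w.semilength := by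
  rw [prod_map_eq_pow_count_mul_pow_count, mul_pow, ← w.semilength_eq_count_D,
    DyckWord.semilength]

theorem partialSum_sub_eq_self {G : Type*} [AddCommGroup G] {n : ℕ} {p : Fin (n + 1) → G}
    (h0 : p 0 = 0) : (Fin.partialSum fun k => p k.succ - p k.castSucc) = p := by
  simpa [h0, sub_eq_neg_add] using Fin.partialSum_left_neg p

theorem snd_partialSum {G H : Type*} [AddMonoid G] [AddMonoid H] {n : ℕ} (s : Fin n → G × H)
    (k : Fin (n + 1)) :
    (Fin.partialSum s k).2 = Fin.partialSum (fun i => (s i).2) k := by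
  have := map_list_sum (AddMonoidHom.snd G H) ((List.ofFn s).take k)
  simpa [Fin.partialSum, List.map_take, List.map_ofFn, Function.comp_def] using this

theorem partialSum_nonneg_and_last_eq_zero_iff {M : Type*} [AddMonoid M] [Preorder M] {n : ℕ}
    (h : Fin n → M) :
    ((∀ k, 0 ≤ Fin.partialSum h k) ∧ Fin.partialSum h (Fin.last n) = 0) ↔
      (∀ i, 0 ≤ ((List.ofFn h).take i).sum) ∧ (List.ofFn h).sum = 0 := by
  have take_of_le {i : ℕ} (hi : n ≤ i) : (List.ofFn h).take i = List.ofFn h :=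
    List.take_of_length_le (by simpa using hi)
  have last_eq : Fin.partialSum h (Fin.last n) = (List.ofFn h).sum := by
    rw [Fin.partialSum, Fin.val_last, take_of_le le_rfl]
  rw [last_eq]
  refine and_congr_left fun hsum => ⟨fun hk i => ?_, fun hi k => hi k⟩
  rcases lt_or_ge i n with hlt | hge
  · exact hk ⟨i, hlt.trans n.lt_succ_self⟩
  · rw [take_of_le hge, hsum]

section ColoredDyckWord

variable {α : Type*}

/-- A colored Dyck word: a word in an alphabet `α` of colored up and down letters, where `f` forgets
the color, whose underlying word is a Dyck word. -/
def IsColoredDyckWord (f : α → DyckStep) (l : List α) : Prop :=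
  ∃ w : DyckWord, w.toList = l.map f

theorem length_eq_two_mul_semilength {f : α → DyckStep} {l : List α} {w : DyckWord}
    (hw : w.toList = l.map f) : l.length = 2 * w.semilength := by
  rw [w.two_mul_semilength_eq_length, hw, List.length_map]

theorem IsColoredDyckWord.even_length {f : α → DyckStep} {l : List α}
    (h : IsColoredDyckWord f l) : Even l.length := by
  obtain ⟨w, hw⟩ := h
  exact length_eq_two_mul_semilength hw ▸ even_two_mul _

theorem natCard_isColoredDyckWord [Finite α] (f : α → DyckStep) (m : ℕ) :
    Nat.card {l : List α // l.length = 2 * m ∧ IsColoredDyckWord f l} =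
      (Nat.card {a // f a = U} * Nat.card {a // f a = D}) ^ m * catalan m := by
  let forgetDyckWord
      (x : Σ w : {w : DyckWord // w.semilength = m}, {l : List α // l.map f = w.1.toList}) :
      {l : List α // l.length = 2 * m ∧ IsColoredDyckWord f l} :=
    ⟨x.2, by rw [length_eq_two_mul_semilength x.2.2.symm, x.1.2], x.1, x.2.2.symm⟩
  have forgetDyckWord_bijective : Function.Bijective forgetDyckWord := by
    constructor
    · rintro ⟨⟨w, _⟩, l, hl⟩ ⟨⟨w', _⟩, l', hl'⟩ h
      obtain rfl : l = l' := congrArg Subtype.val h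
      obtain rfl : w = w' := DyckWord.ext (hl.symm.trans hl')
      rfl
    · rintro ⟨l, hlen, w, hw⟩
      have hm : w.semilength = m := by
        have := length_eq_two_mul_semilength hw
        omega
      exact ⟨⟨⟨w, hm⟩, l, hw.symm⟩, rfl⟩
  have (L : List DyckStep) : Finite {l : List α // l.map f = L} := finite_list_map_eq f L
  have card_fiber (w : {w : DyckWord // w.semilength = m}) :
      Nat.card {l : List α // l.map f = w.1.toList} =
        (Nat.card {a // f a = U} * Nat.card {a // f a = D}) ^ m := by
    rw [natCard_list_map_eq, prod_map_dyckWord, w.2]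
  rw [← Nat.card_eq_of_bijective forgetDyckWord forgetDyckWord_bijective, Nat.card_sigma]
  simp only [card_fiber, Finset.sum_const, Finset.card_univ, smul_eq_mul,
    DyckWord.card_dyckWord_semilength_eq_catalan, mul_comm]

end ColoredDyckWord

section HalfPlaneWalk

/-- The height gained along an up or down step. -/
def rise : DyckStep → ℤ
  | U => 1
  | D => -1

/-- The direction of a step of height `±1`; any height other than `1` counts as down. -/
def direction (h : ℤ) : DyckStep :=
  if h = 1 then U else D

theorem rise_direction {h : ℤ} (hh : h = 1 ∨ h = -1) : rise (direction h) = h := by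
  rcases hh with rfl | rfl <;> rfl

theorem direction_eq_U_iff {h : ℤ} : direction h = U ↔ h = 1 := by
  simp [direction]

theorem direction_eq_D_iff {h : ℤ} (hh : h = 1 ∨ h = -1) : direction h = D ↔ h = -1 := by
  rcases hh with rfl | rfl <;> simp [direction]

theorem sum_map_rise (L : List DyckStep) :
    (L.map rise).sum = L.count U - L.count D := by
  induction L with
  | nil => simp
  | cons s L ih => cases s <;> simp [ih, rise] <;> ring

theorem exists_dyckWord_toList_eq_iff {L : List DyckStep} :
    (∃ w : DyckWord, w.toList = L) ↔
      (∀ i, 0 ≤ ((L.map rise).take i).sum) ∧ (L.map rise).sum = 0 := by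
  simp only [← List.map_take, sum_map_rise, sub_nonneg, sub_eq_zero, Nat.cast_le, Nat.cast_inj]
  constructor
  · rintro ⟨w, rfl⟩
    exact ⟨w.count_D_le_count_U, w.count_U_eq_count_D⟩
  · rintro ⟨hle, heq⟩
    exact ⟨⟨L, heq, hle⟩, rfl⟩

variable {S : Set (ℤ × ℤ)}

theorem isHalfWalkToAxis_partialSum_iff (hS : ∀ s ∈ S, s.2 = 1 ∨ s.2 = -1) {n : ℕ}
    (s : Fin n → S) :
    IsHalfWalkToAxis S n (Fin.partialSum fun k => (s k : ℤ × ℤ)) ↔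
      IsColoredDyckWord (fun x : S => direction x.1.2) (List.ofFn s) := by
  have heights_eq : ((List.ofFn s).map fun x : S => direction x.1.2).map rise =
      List.ofFn fun k => (s k).1.2 := by
    simp only [List.map_ofFn, Function.comp_def, rise_direction (hS _ (s _).2)]
  have steps_mem (k : Fin n) : Fin.partialSum (fun k => (s k : ℤ × ℤ)) k.succ -
      Fin.partialSum (fun k => (s k : ℤ × ℤ)) k.castSucc ∈ S := by
    rw [Fin.partialSum_succ, add_sub_cancel_left]
    exact (s k).2
  rw [IsColoredDyckWord, exists_dyckWord_toList_eq_iff, heights_eq,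
    ← partialSum_nonneg_and_last_eq_zero_iff]
  simp only [IsHalfWalkToAxis, snd_partialSum]
  exact ⟨fun h => h.2.2, fun h => ⟨Fin.partialSum_zero _, steps_mem, h⟩⟩

theorem natCard_isHalfWalkToAxis (hS : ∀ s ∈ S, s.2 = 1 ∨ s.2 = -1) (n : ℕ) :
    Nat.card {p // IsHalfWalkToAxis S n p} =
      Nat.card {l : List S //
        l.length = n ∧ IsColoredDyckWord (fun x : S => direction x.1.2) l} := by
  let steps (p : {p // IsHalfWalkToAxis S n p}) (k : Fin n) : S :=
    ⟨p.1 k.succ - p.1 k.castSucc, p.2.2.1 k⟩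
  have partialSum_steps (p : {p // IsHalfWalkToAxis S n p}) :
      (Fin.partialSum fun k => (steps p k : ℤ × ℤ)) = p :=
    partialSum_sub_eq_self p.2.1
  refine Nat.card_eq_of_bijective (fun p => ⟨List.ofFn (steps p), List.length_ofFn,
    (isHalfWalkToAxis_partialSum_iff hS _).1 (by rw [partialSum_steps]; exact p.2)⟩) ⟨?_, ?_⟩
  · intro p q hpq
    have steps_eq : steps p = steps q := List.ofFn_injective (congrArg Subtype.val hpq)
    exact Subtype.ext (by rw [← partialSum_steps p, steps_eq, partialSum_steps q])
  · rintro ⟨l, rfl, hl⟩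
    have walk : IsHalfWalkToAxis S l.length (Fin.partialSum fun k => (l.get k : ℤ × ℤ)) :=
      (isHalfWalkToAxis_partialSum_iff hS l.get).2 (by rwa [List.ofFn_get])
    have steps_eq : steps ⟨_, walk⟩ = l.get := by
      funext k
      exact Subtype.ext (by simp only [steps, Fin.partialSum_succ, add_sub_cancel_left])
    exact ⟨⟨_, walk⟩, Subtype.ext (by simp only [steps_eq, List.ofFn_get])⟩

end HalfPlaneWalk

theorem stmt_9_general (S : Set (ℤ × ℤ)) (hfin : S.Finite)
    (hS : ∀ s ∈ S, s.2 = 1 ∨ s.2 = -1) :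
    (∀ m : ℕ, Nat.card {p // IsHalfWalkToAxis S (2 * m) p} =
      ({s ∈ S | s.2 = 1}.ncard * {s ∈ S | s.2 = -1}.ncard) ^ m * catalan m) ∧
    (∀ n : ℕ, Odd n → Nat.card {p // IsHalfWalkToAxis S n p} = 0) := by
  constructor
  · intro m
    have : Finite S := hfin.to_subtype
    have card_up : Nat.card {x : S // direction x.1.2 = U} = {s ∈ S | s.2 = 1}.ncard := by
      simp only [direction_eq_U_iff]
      exact Nat.card_congr (Equiv.subtypeSubtypeEquivSubtypeInter (· ∈ S) (·.2 = 1))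
    have card_down : Nat.card {x : S // direction x.1.2 = D} = {s ∈ S | s.2 = -1}.ncard := by
      simp only [direction_eq_D_iff (hS _ (Subtype.prop _))]
      exact Nat.card_congr (Equiv.subtypeSubtypeEquivSubtypeInter (· ∈ S) (·.2 = -1))
    rw [natCard_isHalfWalkToAxis hS, natCard_isColoredDyckWord, card_up, card_down]
  · intro n hn
    rw [natCard_isHalfWalkToAxis hS, Nat.card_eq_zero]
    refine .inl ⟨fun ⟨l, hlen, hl⟩ => ?_⟩
    exact Nat.not_even_iff_odd.2 hn (hlen ▸ hl.even_length)

theorem stepsS_snd_eq (s : ℤ × ℤ) (hs : s ∈ stepsS) : s.2 = 1 ∨ s.2 = -1 := by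
  rcases hs with rfl | rfl | rfl <;> simp

theorem ncard_up_stepsS : {s ∈ stepsS | s.2 = 1}.ncard = 2 := by
  have : {s ∈ stepsS | s.2 = 1} = {(1, 1), (-1, 1)} := by
    ext s
    constructor
    · rintro ⟨rfl | rfl | rfl, h⟩ <;> simp_all
    · rintro (rfl | rfl) <;> simp [stepsS]
  rw [this, Set.ncard_pair (by decide)]

theorem ncard_down_stepsS : {s ∈ stepsS | s.2 = -1}.ncard = 1 := by
  have : {s ∈ stepsS | s.2 = -1} = {(1, -1)} := by
    ext s
    constructor
    · rintro ⟨rfl | rfl | rfl, h⟩ <;> simp_all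
    · rintro rfl
      simp [stepsS]
  rw [this, Set.ncard_singleton]

theorem stmt_9 :
    (∀ m : ℕ, numHalfWalks (2 * m) = 2 ^ m * catalan m) ∧
    (∀ n : ℕ, Odd n → numHalfWalks n = 0) := by
  have h := stmt_9_general stepsS (by simp [stepsS]) stepsS_snd_eq
  simpa only [ncard_up_stepsS, ncard_down_stepsS, mul_one, numHalfWalks] using h
end

section
/- Let q ∈ ℂ with q ≠ 0 and q² ≠ 1, let s ∈ ℂ satisfy s² = 1 − 6q² + q⁴, set β = (1 + q² + s)/(2q), and let b : ℕ → ℂ satisfy b₀ = 1, b₁ = β, and b_{n+2} = ((1+q²)/q)·b_{n+1} − b_n for all n ≥ 0. If b_n = 0 for some n ≥ 1, then q^{2n} + q^{−2n} + q² + q^{−2} = 4. -/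
/-!
The roots of the characteristic polynomial of the recurrence are `q` and `q⁻¹`, so `(q - q⁻¹) bₙ` is
a combination of `qⁿ` and `q⁻ⁿ`. The equation for `s` says that `β` is a root of
`X² - (q + q⁻¹) X + 2`. Multiplying `(q - q⁻¹) bₙ` by the same combination for the conjugate root
`q + q⁻¹ - β` gives `q²ⁿ + q⁻²ⁿ + q² + q⁻² - 4`, which therefore vanishes with `bₙ`.
-/

section CommRing

variable {R : Type*} [CommRing R] {x y : R} {b : ℕ → R}

theorem sub_mul_eq_of_two_term_recurrence
    (hrec : ∀ n, b (n + 2) = (x + y) * b (n + 1) - x * y * b n) (n : ℕ) :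
    (x - y) * b n = (b 1 - y * b 0) * x ^ n - (b 1 - x * b 0) * y ^ n := by
  induction n using Nat.twoStepInduction with
  | zero => ring
  | one => ring
  | more n ih ih_succ =>
    rw [hrec]
    linear_combination (x + y) * ih_succ - x * y * ih

/-- The last factor on the left is `(x - y) * b' n` for the solution `b'` of the same recurrence
with `b' 0 = 1` and `b' 1 = x + y - b 1`, the conjugate root. -/
theorem sub_mul_mul_conj_eq (hxy : x * y = 1) (hb0 : b 0 = 1)
    (hb1 : b 1 ^ 2 = (x + y) * b 1 - 2)
    (hrec : ∀ n, b (n + 2) = (x + y) * b (n + 1) - b n) (n : ℕ) :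
    (x - y) * b n * ((b 1 - y) * y ^ n - (b 1 - x) * x ^ n) =
      x ^ (2 * n) + y ^ (2 * n) + x ^ 2 + y ^ 2 - 4 := by
  have closed_form : (x - y) * b n = (b 1 - y) * x ^ n - (b 1 - x) * y ^ n := by
    have h := sub_mul_eq_of_two_term_recurrence (x := x) (y := y) (b := b)
      (by simpa only [hxy, one_mul] using hrec) n
    rwa [hb0, mul_one, mul_one] at h
  have coeff_mul : (b 1 - y) * (b 1 - x) = -1 := by linear_combination hb1 + hxy
  have pow_mul_pow : x ^ n * y ^ n = 1 := by rw [← mul_pow, hxy, one_pow]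
  calc (x - y) * b n * ((b 1 - y) * y ^ n - (b 1 - x) * x ^ n)
      = ((b 1 - y) ^ 2 + (b 1 - x) ^ 2) * (x ^ n * y ^ n)
          - (b 1 - y) * (b 1 - x) * (x ^ (2 * n) + y ^ (2 * n)) := by
        rw [closed_form]; ring
    _ = (x - y) ^ 2 + 2 * ((b 1 - y) * (b 1 - x))
          - (b 1 - y) * (b 1 - x) * (x ^ (2 * n) + y ^ (2 * n)) := by
        rw [pow_mul_pow]; ring
    _ = x ^ (2 * n) + y ^ (2 * n) + x ^ 2 + y ^ 2 - 4 := by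
        rw [coeff_mul]; linear_combination -2 * hxy

theorem stmt_11_general (hxy : x * y = 1) (hb0 : b 0 = 1)
    (hb1 : b 1 ^ 2 = (x + y) * b 1 - 2)
    (hrec : ∀ n, b (n + 2) = (x + y) * b (n + 1) - b n) {n : ℕ} (hbn : b n = 0) :
    x ^ (2 * n) + y ^ (2 * n) + x ^ 2 + y ^ 2 = 4 := by
  have h := sub_mul_mul_conj_eq hxy hb0 hb1 hrec n
  rw [hbn, mul_zero, zero_mul] at h
  exact sub_eq_zero.mp h.symm

end CommRing

theorem stmt_11 (q s : ℂ) (hq : q ≠ 0) (hq2 : q ^ 2 ≠ 1)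
    (hs : s ^ 2 = 1 - 6 * q ^ 2 + q ^ 4) (b : ℕ → ℂ)
    (hb0 : b 0 = 1) (hb1 : b 1 = (1 + q ^ 2 + s) / (2 * q))
    (hrec : ∀ n : ℕ, b (n + 2) = ((1 + q ^ 2) / q) * b (n + 1) - b n)
    (n : ℕ) (hn : 1 ≤ n) (hbn : b n = 0) :
    q ^ (2 * (n : ℤ)) + q ^ (-(2 * (n : ℤ))) + q ^ (2 : ℤ) + q ^ (-2 : ℤ) = 4 := by
  have coeff_eq : (1 + q ^ 2) / q = q + q⁻¹ := by field_simp; ring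
  have root : b 1 ^ 2 = (q + q⁻¹) * b 1 - 2 := by
    rw [hb1]; field_simp; linear_combination hs
  simp only [zpow_neg, ← inv_zpow]
  exact_mod_cast stmt_11_general (mul_inv_cancel₀ hq) hb0 root (coeff_eq ▸ hrec) hbn
end

section
/- Let q ∈ ℂ with q ≠ 0 and q² ≠ 1, let s ∈ ℂ satisfy s² = 1 − 6q² + q⁴, set β = (1 + q² + s)/(2q), and let b : ℕ → ℂ satisfy b₀ = 1, b₁ = β, and b_{n+2} = ((1+q²)/q)·b_{n+1} − b_n for all n ≥ 0. If b_n = 0 and b_k = 0 for integers n, k ≥ 1, then n = k. In other words, a nonzero complex number q (with q² ≠ 1) is a zero of at most one member of the family (b_n). -/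
/-!
Put `Q = q ^ 2`. The recurrence has characteristic roots `q` and `q⁻¹`, so
`b (n + 1) - q * b n` and `b (n + 1) - q⁻¹ * b n` are geometric sequences with ratios `q⁻¹` and `q`.
The choice of `β` means precisely that `(β - q) * (β - q⁻¹) = -1`. Comparing the two geometric
sequences at a zero `b n = 0` therefore gives `(β - q) ^ 2 = -Q ^ n`, and symmetrically
`(β - q⁻¹) ^ 2 = -Q⁻¹ ^ n`. Expanding `(q - q⁻¹) ^ 2` in terms of these yields
`Q + Q⁻¹ + (Q ^ n + Q⁻¹ ^ n) = 4`.

Two zeros `n ≠ k` would give `Q ^ n = Q ^ k`, hence `‖Q‖ = 1`; but four points of the unit circle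
add up to `4` only if they all equal `1`.
-/

section SecondOrderRecurrence

variable {R : Type*} [CommRing R] {r t : R} {b : ℕ → R}

theorem sub_root_mul_eq_pow_mul
    (hrec : ∀ n, b (n + 2) = (r + t) * b (n + 1) - r * t * b n) (n : ℕ) :
    b (n + 1) - r * b n = t ^ n * (b 1 - r * b 0) := by
  induction n with
  | zero => simp
  | succ n ih => linear_combination hrec n + t * ih

theorem pow_mul_sq_sub_root_mul_of_eq_zero
    (hrec : ∀ n, b (n + 2) = (r + t) * b (n + 1) - r * t * b n) {n : ℕ} (hn : b n = 0) :
    t ^ n * (b 1 - r * b 0) ^ 2 = r ^ n * ((b 1 - r * b 0) * (b 1 - t * b 0)) := by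
  have hr : b (n + 1) = t ^ n * (b 1 - r * b 0) := by
    simpa [hn] using sub_root_mul_eq_pow_mul hrec n
  have hrec' (m : ℕ) : b (m + 2) = (t + r) * b (m + 1) - t * r * b m := by
    rw [hrec, add_comm r, mul_comm r]
  have ht : b (n + 1) = r ^ n * (b 1 - t * b 0) := by
    simpa [hn] using sub_root_mul_eq_pow_mul hrec' n
  linear_combination (b 1 - r * b 0) * (ht - hr)

end SecondOrderRecurrence

section ReciprocalRoots

variable {K : Type*} [Field K] {q : K} {b : ℕ → K}

theorem sq_sub_root_eq_neg_pow_of_eq_zero (hq : q ≠ 0)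
    (hrec : ∀ n, b (n + 2) = (q + q⁻¹) * b (n + 1) - b n) (hb0 : b 0 = 1)
    (hb1 : (b 1 - q) * (b 1 - q⁻¹) = -1) {n : ℕ} (hn : b n = 0) :
    (b 1 - q) ^ 2 = -(q ^ 2) ^ n := by
  have h : q⁻¹ ^ n * (b 1 - q) ^ 2 = -q ^ n := by
    simpa [hb0, hb1] using
      pow_mul_sq_sub_root_mul_of_eq_zero (r := q) (t := q⁻¹) (by simpa [hq] using hrec) hn
  have hpow : q ^ n * q⁻¹ ^ n = 1 := by rw [← mul_pow, mul_inv_cancel₀ hq, one_pow]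
  linear_combination q ^ n * h - (b 1 - q) ^ 2 * hpow

theorem sq_add_inv_add_pow_add_inv_eq_four_of_eq_zero (hq : q ≠ 0)
    (hrec : ∀ n, b (n + 2) = (q + q⁻¹) * b (n + 1) - b n) (hb0 : b 0 = 1)
    (hb1 : (b 1 - q) * (b 1 - q⁻¹) = -1) {n : ℕ} (hn : b n = 0) :
    q ^ 2 + (q ^ 2)⁻¹ + ((q ^ 2) ^ n + ((q ^ 2) ^ n)⁻¹) = 4 := by
  have h : (b 1 - q) ^ 2 = -(q ^ 2) ^ n :=
    sq_sub_root_eq_neg_pow_of_eq_zero hq hrec hb0 hb1 hn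
  have h_inv : (b 1 - q⁻¹) ^ 2 = -(q⁻¹ ^ 2) ^ n :=
    sq_sub_root_eq_neg_pow_of_eq_zero (inv_ne_zero hq)
      (by simpa only [inv_inv, add_comm] using hrec) hb0
      (by rwa [inv_inv, mul_comm]) hn
  rw [← inv_pow, ← inv_pow, ← inv_pow]
  linear_combination h + h_inv - 2 * hb1 + 2 * mul_inv_cancel₀ hq

end ReciprocalRoots

theorem norm_eq_one_of_pow_eq_pow {K : Type*} [NormedDivisionRing K] {z : K} (hz : z ≠ 0)
    {m n : ℕ} (hmn : m ≠ n) (h : z ^ m = z ^ n) : ‖z‖ = 1 := by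
  by_contra h_norm
  exact hmn (pow_right_injective₀ (norm_pos_iff.mpr hz) h_norm (by simp only [← norm_pow, h]))

theorem eq_one_of_add_inv_add_add_inv_eq_four {z w : ℂ} (hz : ‖z‖ = 1) (hw : ‖w‖ = 1)
    (h : z + z⁻¹ + (w + w⁻¹) = 4) : z = 1 := by
  have h_re : 2 * z.re + 2 * w.re = 4 := by
    rw [Complex.inv_eq_conj hz, Complex.inv_eq_conj hw, Complex.add_conj, Complex.add_conj] at h
    exact_mod_cast h
  have hz_re : z.re = ‖z‖ := by
    linarith [Complex.re_le_norm z, Complex.re_le_norm w]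
  simpa [hz] using Complex.eq_coe_norm_of_nonneg (Complex.re_eq_norm.mp hz_re)

theorem stmt_14 (q s : ℂ) (hq : q ≠ 0) (hq2 : q ^ 2 ≠ 1)
    (hs : s ^ 2 = 1 - 6 * q ^ 2 + q ^ 4) (b : ℕ → ℂ)
    (hb0 : b 0 = 1) (hb1 : b 1 = (1 + q ^ 2 + s) / (2 * q))
    (hrec : ∀ n : ℕ, b (n + 2) = ((1 + q ^ 2) / q) * b (n + 1) - b n)
    (n k : ℕ) (hn : 1 ≤ n) (hk : 1 ≤ k)
    (hbn : b n = 0) (hbk : b k = 0) :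
    n = k := by
  have h_trace : (1 + q ^ 2) / q = q + q⁻¹ := by field_simp; ring
  have h_init : (b 1 - q) * (b 1 - q⁻¹) = -1 := by
    rw [hb1]
    field_simp
    linear_combination hs
  rw [h_trace] at hrec
  by_contra hnk
  have h_pow : (q ^ 2) ^ n = (q ^ 2) ^ k := by
    rw [← neg_inj, ← sq_sub_root_eq_neg_pow_of_eq_zero hq hrec hb0 h_init hbn,
      sq_sub_root_eq_neg_pow_of_eq_zero hq hrec hb0 h_init hbk]
  have h_norm : ‖q ^ 2‖ = 1 := norm_eq_one_of_pow_eq_pow (pow_ne_zero 2 hq) hnk h_pow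
  have h_norm_pow : ‖(q ^ 2) ^ n‖ = 1 := by rw [norm_pow, h_norm, one_pow]
  exact hq2 <| eq_one_of_add_inv_add_add_inv_eq_four h_norm h_norm_pow <|
    sq_add_inv_add_pow_add_inv_eq_four_of_eq_zero hq hrec hb0 h_init hbn
end

section
/- For every integer m ≥ 1, the function f : ℝ → ℝ defined by f(r) = (1 − r^{4m})·√(1 + 6r² + r⁴) + (1 + r²)(1 + r^{4m}) has a zero in the open interval (1, 2) and a zero in the open interval (−2, −1). In particular f(±1) = 4 and f(±2) < 0. -/
/-!
Write `s = √(1 + 6r² + r⁴)`. Since `s² - (1 + r²)² = 4r²`, multiplying `f` by the positive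
conjugate factor `s + (1 + r²)` gives `(s + (1 + r²))² - 4 r ^ (4m + 2)`, so the sign of `f` is
that of a power of `r` compared with a quantity independent of `m`. At `r = 2` the power wins
for every `m ≥ 1`, while `f 1 = 4`; the intermediate value theorem gives a zero in `(1, 2)`, and
evenness of `f` reflects it to `(-2, -1)`.
-/

open Set

/-- The function `f` of the theorem with `r ^ (4m)` replaced by `r ^ n`. For `n = 4m` its zeros `r`
correspond to the zeros `q = ir` of the reciprocal kernel root iterate `1 / Y_{2m}(1; q/(1+q²))`. -/
noncomputable def imagAxisKernel (n : ℕ) (r : ℝ) : ℝ :=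
  (1 - r ^ n) * √(1 + 6 * r ^ 2 + r ^ 4) + (1 + r ^ 2) * (1 + r ^ n)

namespace imagAxisKernel

variable {n : ℕ}

theorem continuous : Continuous (imagAxisKernel n) := by
  unfold imagAxisKernel
  fun_prop

theorem even (hn : Even n) : Function.Even (imagAxisKernel n) := fun r ↦ by
  have h4 : Even 4 := by decide
  simp only [imagAxisKernel, hn.neg_pow, h4.neg_pow, neg_sq]

theorem apply_one : imagAxisKernel n 1 = 4 := by
  norm_num [imagAxisKernel]

theorem conj_mul (r : ℝ) :
    (√(1 + 6 * r ^ 2 + r ^ 4) + (1 + r ^ 2)) * imagAxisKernel n r =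
      (√(1 + 6 * r ^ 2 + r ^ 4) + (1 + r ^ 2)) ^ 2 - 4 * r ^ (n + 2) := by
  have sq_root : √(1 + 6 * r ^ 2 + r ^ 4) ^ 2 = 1 + 6 * r ^ 2 + r ^ 4 :=
    Real.sq_sqrt (by positivity)
  rw [imagAxisKernel]
  linear_combination -r ^ n * sq_root

theorem neg_iff (r : ℝ) :
    imagAxisKernel n r < 0 ↔
      (√(1 + 6 * r ^ 2 + r ^ 4) + (1 + r ^ 2)) ^ 2 < 4 * r ^ (n + 2) := by
  have conj_pos : 0 < √(1 + 6 * r ^ 2 + r ^ 4) + (1 + r ^ 2) := by positivity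
  rw [← smul_neg_iff_of_pos_left conj_pos, smul_eq_mul, conj_mul, sub_neg]

theorem apply_two_neg (hn : 4 ≤ n) : imagAxisKernel n 2 < 0 := by
  rw [neg_iff]
  have root_le : √(1 + 6 * 2 ^ 2 + 2 ^ 4) ≤ 7 := Real.sqrt_le_iff.mpr (by norm_num)
  calc (√(1 + 6 * 2 ^ 2 + 2 ^ 4) + (1 + 2 ^ 2)) ^ 2
      ≤ (7 + (1 + 2 ^ 2)) ^ 2 := by gcongr
    _ < 4 * 2 ^ (4 + 2) := by norm_num
    _ ≤ 4 * 2 ^ (n + 2) := by gcongr; norm_num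

theorem exists_eq_zero (hn : 4 ≤ n) : ∃ r ∈ Ioo (1 : ℝ) 2, imagAxisKernel n r = 0 :=
  intermediate_value_Ioo' one_le_two continuous.continuousOn
    ⟨apply_two_neg hn, apply_one.symm ▸ four_pos⟩

end imagAxisKernel

theorem stmt_18_general {n : ℕ} (hn : 4 ≤ n) (hn_even : Even n) :
    (∃ r ∈ Ioo (1 : ℝ) 2, imagAxisKernel n r = 0) ∧
    (∃ r ∈ Ioo (-2 : ℝ) (-1), imagAxisKernel n r = 0) ∧
    imagAxisKernel n 1 = 4 ∧ imagAxisKernel n (-1) = 4 ∧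
    imagAxisKernel n 2 < 0 ∧ imagAxisKernel n (-2) < 0 := by
  have even := imagAxisKernel.even hn_even
  have at_one : imagAxisKernel n 1 = 4 := imagAxisKernel.apply_one
  have at_two : imagAxisKernel n 2 < 0 := imagAxisKernel.apply_two_neg hn
  obtain ⟨r, hr, hr_zero⟩ := imagAxisKernel.exists_eq_zero hn
  exact ⟨⟨r, hr, hr_zero⟩,
    ⟨-r, ⟨neg_lt_neg hr.2, neg_lt_neg hr.1⟩, (even r).trans hr_zero⟩,
    at_one, (even 1).trans at_one, at_two, (even 2).trans_lt at_two⟩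

theorem stmt_18 (m : ℕ) (hm : 1 ≤ m) (f : ℝ → ℝ)
    (hf : ∀ r, f r = (1 - r ^ (4 * m)) * Real.sqrt (1 + 6 * r ^ 2 + r ^ 4)
      + (1 + r ^ 2) * (1 + r ^ (4 * m))) :
    (∃ r ∈ Set.Ioo (1 : ℝ) 2, f r = 0) ∧
    (∃ r ∈ Set.Ioo (-2 : ℝ) (-1), f r = 0) ∧
    f 1 = 4 ∧ f (-1) = 4 ∧ f 2 < 0 ∧ f (-2) < 0 := by
  obtain rfl : f = imagAxisKernel (4 * m) := funext hf
  exact stmt_18_general (by lia) (Even.mul_right (by decide) m)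
end

section
/- For every integer n ≥ 1 and every nonzero real number r, setting q = i·r ∈ ℂ, one has q²(q² − 3q + 1)(q^{4n} + 1) − q(q + 1)²(q² − 3q + 1)(q^{3n} + qⁿ) − (q⁶ − 4q⁵ + 3q⁴ + 6q³ + 3q² − 4q + 1)·q^{2n} ≠ 0. -/
/-!
The polynomial is palindromic both in `q` and in `y = qⁿ`, so for `q, y ≠ 0` it is `q³ y²` times a
polynomial in `s = q + q⁻¹` and `w = y + y⁻¹`. When `q` is purely imaginary, `s` is purely imaginary
and `w` is real or purely imaginary according to the parity of `n`; in either case the real and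
imaginary parts of the polynomial in `s` and `w` have no common real zero.
-/

/-- The polynomial that vanishes at `y = qⁿ` for every zero `q ≠ 0, ±1` of the reciprocal iterated
kernel root `1 / X̄ₙ(q)`; the power `qⁿ` is replaced by an independent variable `y`. -/
def kernelRootPoly {R : Type*} [CommRing R] (q y : R) : R :=
  q ^ 2 * (q ^ 2 - 3 * q + 1) * (y ^ 4 + 1)
    - q * (q + 1) ^ 2 * (q ^ 2 - 3 * q + 1) * (y ^ 3 + y)
    - (q ^ 6 - 4 * q ^ 5 + 3 * q ^ 4 + 6 * q ^ 3 + 3 * q ^ 2 - 4 * q + 1) * y ^ 2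

/-- `kernelRootPoly` in the reciprocal-invariant variables `s = q + q⁻¹` and `w = y + y⁻¹`, up to
the factor `q³ y²`. -/
def reducedKernelRootPoly {R : Type*} [CommRing R] (s w : R) : R :=
  (s - 3) * (w ^ 2 - (s + 2) * w) - (s ^ 3 - 4 * s ^ 2 + 2 * s + 8)

theorem kernelRootPoly_eq_mul_reducedKernelRootPoly {K : Type*} [Field K] {q y : K}
    (hq : q ≠ 0) (hy : y ≠ 0) :
    kernelRootPoly q y = q ^ 3 * y ^ 2 * reducedKernelRootPoly (q + q⁻¹) (y + y⁻¹) := by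
  unfold kernelRootPoly reducedKernelRootPoly
  field_simp
  ring

theorem re_add_inv_eq_zero {z : ℂ} (hz : z.re = 0) : (z + z⁻¹).re = 0 := by
  simp [hz]

theorem im_add_inv_eq_zero {z : ℂ} (hz : z.im = 0) : (z + z⁻¹).im = 0 := by
  simp [hz]

theorem re_pow_eq_zero_or_im_pow_eq_zero {z : ℂ} (hz : z.re = 0) (n : ℕ) :
    (z ^ n).re = 0 ∨ (z ^ n).im = 0 := by
  induction n with
  | zero => simp
  | succ n ih => simpa [pow_succ, hz] using ih.symm.imp Or.inl Or.inl

theorem re_reducedKernelRootPoly_of_im_eq_zero {s w : ℂ} (hs : s.re = 0) (hw : w.im = 0) :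
    (reducedKernelRootPoly s w).re
      = s.im ^ 2 * (w.re - 4) - (3 * w.re ^ 2 - 6 * w.re + 8) := by
  simp [reducedKernelRootPoly, pow_succ, hs, hw]
  ring

theorem im_reducedKernelRootPoly_of_im_eq_zero {s w : ℂ} (hs : s.re = 0) (hw : w.im = 0) :
    (reducedKernelRootPoly s w).im = s.im * (w.re ^ 2 + w.re + s.im ^ 2 - 2) := by
  simp [reducedKernelRootPoly, pow_succ, hs, hw]
  ring

theorem re_reducedKernelRootPoly_of_re_eq_zero {s w : ℂ} (hs : s.re = 0) (hw : w.re = 0) :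
    (reducedKernelRootPoly s w).re = 3 * w.im ^ 2 - s.im * w.im - 4 * s.im ^ 2 - 8 := by
  simp [reducedKernelRootPoly, pow_succ, hs, hw]
  ring

theorem im_reducedKernelRootPoly_of_re_eq_zero {s w : ℂ} (hs : s.re = 0) (hw : w.re = 0) :
    (reducedKernelRootPoly s w).im
      = s.im ^ 3 + s.im ^ 2 * w.im - s.im * w.im ^ 2 - 2 * s.im + 6 * w.im := by
  simp [reducedKernelRootPoly, pow_succ, hs, hw]
  ring

theorem reducedKernelRootPoly_ne_zero_of_im_eq_zero {s w : ℂ} (hs : s.re = 0) (hw : w.im = 0) :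
    reducedKernelRootPoly s w ≠ 0 := by
  intro h
  have re_eq := re_reducedKernelRootPoly_of_im_eq_zero hs hw
  have im_eq := im_reducedKernelRootPoly_of_im_eq_zero hs hw
  rw [h, Complex.zero_re] at re_eq
  rw [h, Complex.zero_im] at im_eq
  have hpos : 0 < s.im ^ 2 * (w.re - 4) := by linarith [sq_nonneg (w.re - 1)]
  have hw_gt : 4 < w.re := sub_pos.1 (pos_of_mul_pos_right hpos (sq_nonneg s.im))
  have hs_ne : s.im ≠ 0 := sq_pos_iff.1 (pos_of_mul_pos_left hpos (sub_pos.2 hw_gt).le)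
  have himag : w.re ^ 2 + w.re + s.im ^ 2 - 2 = 0 :=
    (mul_eq_zero.1 im_eq.symm).resolve_left hs_ne
  linarith [sq_nonneg w.re, sq_nonneg s.im]

theorem reducedKernelRootPoly_ne_zero_of_re_eq_zero {s w : ℂ} (hs : s.re = 0) (hw : w.re = 0) :
    reducedKernelRootPoly s w ≠ 0 := by
  intro h
  have re_eq := re_reducedKernelRootPoly_of_re_eq_zero hs hw
  have im_eq := im_reducedKernelRootPoly_of_re_eq_zero hs hw
  rw [h, Complex.zero_re] at re_eq
  rw [h, Complex.zero_im] at im_eq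
  -- Eliminating the constant `8` leaves a homogeneous cubic, which happens to split.
  have cubic_eq : (w.im - s.im) ^ 2 * (9 * w.im + 8 * s.im) = 0 := by
    linear_combination (s.im - 3 * w.im) * re_eq - 4 * im_eq
  rcases mul_eq_zero.1 cubic_eq with hsq | hlin
  · have heq : w.im = s.im := sub_eq_zero.1 (sq_eq_zero_iff.1 hsq)
    rw [heq] at re_eq
    linarith [sq_nonneg s.im]
  · have heq : w.im = -8 / 9 * s.im := by linarith
    rw [heq] at re_eq
    linarith [sq_nonneg s.im]

theorem stmt_19_general {q y : ℂ} (hq : q ≠ 0) (hq_re : q.re = 0) (hy : y ≠ 0)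
    (hy_axis : y.re = 0 ∨ y.im = 0) : kernelRootPoly q y ≠ 0 := by
  have hs : (q + q⁻¹).re = 0 := re_add_inv_eq_zero hq_re
  have reduced_ne_zero : reducedKernelRootPoly (q + q⁻¹) (y + y⁻¹) ≠ 0 := by
    rcases hy_axis with hy_re | hy_im
    · exact reducedKernelRootPoly_ne_zero_of_re_eq_zero hs (re_add_inv_eq_zero hy_re)
    · exact reducedKernelRootPoly_ne_zero_of_im_eq_zero hs (im_add_inv_eq_zero hy_im)
  rw [kernelRootPoly_eq_mul_reducedKernelRootPoly hq hy]
  exact mul_ne_zero (mul_ne_zero (pow_ne_zero 3 hq) (pow_ne_zero 2 hy)) reduced_ne_zero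

theorem stmt_19 (n : ℕ) (hn : 1 ≤ n) (r : ℝ) (hr : r ≠ 0) :
    (Complex.I * (r : ℂ)) ^ 2 * ((Complex.I * (r : ℂ)) ^ 2 - 3 * (Complex.I * (r : ℂ)) + 1)
        * ((Complex.I * (r : ℂ)) ^ (4 * n) + 1)
      - (Complex.I * (r : ℂ)) * ((Complex.I * (r : ℂ)) + 1) ^ 2
        * ((Complex.I * (r : ℂ)) ^ 2 - 3 * (Complex.I * (r : ℂ)) + 1)
        * ((Complex.I * (r : ℂ)) ^ (3 * n) + (Complex.I * (r : ℂ)) ^ n)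
      - ((Complex.I * (r : ℂ)) ^ 6 - 4 * (Complex.I * (r : ℂ)) ^ 5
          + 3 * (Complex.I * (r : ℂ)) ^ 4 + 6 * (Complex.I * (r : ℂ)) ^ 3
          + 3 * (Complex.I * (r : ℂ)) ^ 2 - 4 * (Complex.I * (r : ℂ)) + 1)
        * (Complex.I * (r : ℂ)) ^ (2 * n) ≠ 0 := by
  have hq : Complex.I * (r : ℂ) ≠ 0 := mul_ne_zero Complex.I_ne_zero (Complex.ofReal_ne_zero.2 hr)
  have hq_re : (Complex.I * (r : ℂ)).re = 0 := by simp
  simpa only [kernelRootPoly, pow_mul'] using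
    stmt_19_general hq hq_re (pow_ne_zero n hq) (re_pow_eq_zero_or_im_pow_eq_zero hq_re n)
end
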